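/- Let K₁ be a field and let K₁ ⊇ K₂ ⊇ K₃ ⊇ ⋯ be a decreasing sequence of subfields of K₁; set K_∞ := ⋂_{n≥1} K_n and assume that K_∞ is a PAC field. Let φ(x₁, …, x_m) be a quantifier-free formula in the first-order language of rings with parameters from K_∞. If for every n ≥ 1 there exists a tuple a ∈ K_n^m such that φ(a) holds in the field K_n, then there exists a tuple b ∈ K_∞^m such that φ(b) holds in the field K_∞. -/

import Mathlib

universe u

/-- A field `F` is pseudo-algebraically closed (PAC) if every finitely generated commutative
`F`-algebra `A` such that `A ⊗[F] F̄` is an integral domain admits an `F`-algebra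
homomorphism to `F`. -/
def IsPAC (F : Type u) [Field F] : Prop :=
  ∀ (A : Type u) [CommRing A] [Algebra F A], Algebra.FiniteType F A →
    IsDomain (TensorProduct F A (AlgebraicClosure F)) → Nonempty (A →ₐ[F] F)

/-!
Write `K` for the intersection of the fields `F i` and `F*` for their ultraproduct along an
ultrafilter finer than `atTop`. Finitely many vectors that are linearly independent over `K` are
already so over some `F i`, so `F*` is linearly disjoint over `K` from every field between `K` and
`E`. When `E` is algebraically closed this makes `F* ⊗[K] K̄` a domain, and since `K` is PAC, every
finite pattern of vanishing and nonvanishing of polynomials over `K` that occurs at a point of `F*`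
occurs at a point of `K`. The points of the `F i` realizing `φ` give a point of `F*`, and whether a
quantifier-free formula holds depends only on such a pattern.
-/

open Filter MvPolynomial
open scoped TensorProduct

section FirstOrder

open FirstOrder FirstOrder.Language FirstOrder.Ring

variable {P : Type*} [CommRing P] [CompatibleRing P] {α : Type*}

theorem realize_ringHom_comp {R : Type*} [CommRing R] [CompatibleRing R] (g : P →+* R)
    (t : Language.ring.Term α) (v : α → P) : t.realize (g ∘ v) = g (t.realize v) :=
  HomClass.realize_term
    ({ toFun := g
       map_fun' := fun f x => by cases f <;> simp
       map_rel' := fun r => isEmptyElim r } : Language.ring.Hom P R)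

theorem exists_finset_realize_iff_of_isQF {n : ℕ} {φ : Language.ring.BoundedFormula α n}
    (hφ : φ.IsQF) (v : α → P) (xs : Fin n → P) :
    ∃ S : Finset P, ∀ {R R' : Type*} [CommRing R] [CompatibleRing R] [CommRing R']
      [CompatibleRing R'] (g : P →+* R) (g' : P →+* R'), (∀ p ∈ S, g p = 0 ↔ g' p = 0) →
      (φ.Realize (g ∘ v) (g ∘ xs) ↔ φ.Realize (g' ∘ v) (g' ∘ xs)) := by
  classical
  induction hφ with
  | falsum => exact ⟨∅, fun _ _ _ => Iff.rfl⟩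
  | of_isAtomic hatomic =>
    cases hatomic with
    | equal t₁ t₂ =>
      refine ⟨{t₁.realize (Sum.elim v xs) - t₂.realize (Sum.elim v xs)}, fun g g' hgg' => ?_⟩
      simpa only [Term.bdEqual, BoundedFormula.Realize, ← Sum.comp_elim, realize_ringHom_comp,
        Finset.mem_singleton, forall_eq, map_sub, sub_eq_zero] using hgg'
    | rel r => exact isEmptyElim r
  | imp _ _ ih₁ ih₂ =>
    obtain ⟨S₁, hS₁⟩ := ih₁
    obtain ⟨S₂, hS₂⟩ := ih₂
    exact ⟨S₁ ∪ S₂, fun g g' hgg' => imp_congr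
      (hS₁ g g' fun p hp => hgg' p (Finset.mem_union_left _ hp))
      (hS₂ g g' fun p hp => hgg' p (Finset.mem_union_right _ hp))⟩

theorem eval₂Hom_comp_sumElim {R A σ : Type*} [CommSemiring R] [CommSemiring A] (f : R →+* A)
    (a : σ → A) : eval₂Hom f a ∘ Sum.elim C X = Sum.elim f a := by
  ext (r | i) <;> simp

theorem exists_finset_mvPolynomial_realize_iff_of_isQF {R σ : Type*} [CommRing R]
    {φ : Language.ring.Formula (R ⊕ σ)} (hφ : φ.IsQF) :
    ∃ S : Finset (MvPolynomial σ R), ∀ {A B : Type*} [CommRing A] [CompatibleRing A] [CommRing B]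
      [CompatibleRing B] (f : R →+* A) (g : R →+* B) (a : σ → A) (b : σ → B),
      (∀ p ∈ S, p.eval₂ f a = 0 ↔ p.eval₂ g b = 0) →
      (φ.Realize (Sum.elim f a) ↔ φ.Realize (Sum.elim g b)) := by
  let := compatibleRingOfRing (MvPolynomial σ R)
  obtain ⟨S, hS⟩ := exists_finset_realize_iff_of_isQF hφ (Sum.elim C X) default
  refine ⟨S, fun f g a b hfg => ?_⟩
  have := hS (eval₂Hom f a) (eval₂Hom g b) hfg
  rwa [eval₂Hom_comp_sumElim, eval₂Hom_comp_sumElim, Subsingleton.elim (_ ∘ default) default,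
    Subsingleton.elim (_ ∘ default) default] at this

end FirstOrder

section ExistentiallyClosed

variable {K : Type u} [Field K]

theorem IsPAC.nonempty_algHom (hK : IsPAC K) (A : Type*) [CommRing A] [Algebra K A]
    [Algebra.FiniteType K A] [IsDomain (A ⊗[K] AlgebraicClosure K)] : Nonempty (A →ₐ[K] K) := by
  obtain ⟨n, f, hf⟩ := Algebra.FiniteType.iff_quotient_mvPolynomial''.1 ‹Algebra.FiniteType K A›
  let e := Ideal.quotientKerAlgEquivOfSurjective hf
  obtain ⟨g⟩ := hK (MvPolynomial (Fin n) K ⧸ RingHom.ker f) inferInstance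
    (Algebra.TensorProduct.congr e AlgEquiv.refl).toMulEquiv.isDomain
  exact ⟨g.comp e.symm.toAlgHom⟩

theorem isDomain_subalgebra_tensorProduct {R A B : Type*} [CommRing R] [CommRing A] [Algebra R A]
    [CommRing B] [Algebra R B] [Module.Flat R B] [IsDomain (A ⊗[R] B)] (A' : Subalgebra R A) :
    IsDomain (A' ⊗[R] B) :=
  (Module.Flat.rTensor_preserves_injective_linearMap A'.val.toLinearMap
    Subtype.val_injective).isDomain (Algebra.TensorProduct.map A'.val (AlgHom.id R B))

theorem exists_aeval_subalgebra_eq {R A σ : Type*} [CommRing R] [CommRing A] [Algebra R A]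
    (A' : Subalgebra R A) (a : σ → A) :
    ∃ a' : σ → A', ∀ p : MvPolynomial σ R, (∀ i ∈ p.vars, a i ∈ A') →
      (aeval a' p : A) = aeval a p := by
  classical
  refine ⟨fun i => if h : a i ∈ A' then ⟨a i, h⟩ else 0, fun p hp => ?_⟩
  rw [← Subalgebra.coe_val, comp_aeval_apply]
  refine eval₂Hom_congr' rfl (fun i hi _ => ?_) rfl
  simp [hp i hi]

theorem IsPAC.exists_aeval_eq_zero_iff (hK : IsPAC K) {L σ : Type*} [Field L] [Algebra K L]
    [IsDomain (L ⊗[K] AlgebraicClosure K)] (S : Finset (MvPolynomial σ K)) (a : σ → L) :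
    ∃ b : σ → K, ∀ p ∈ S, aeval b p = 0 ↔ aeval a p = 0 := by
  classical
  -- The inverses keep the nonzero values `aeval a p` nonzero under homomorphisms out of `A`.
  let T : Finset L := (S.biUnion vars).image a ∪ S.image fun p => (aeval a p)⁻¹
  let A := Algebra.adjoin K (T : Set L)
  have : Algebra.FiniteType K A := A.fg_iff_finiteType.1 (Subalgebra.fg_adjoin_finset T)
  have := isDomain_subalgebra_tensorProduct (B := AlgebraicClosure K) A
  obtain ⟨g⟩ := hK.nonempty_algHom A
  obtain ⟨a', ha'⟩ := exists_aeval_subalgebra_eq (R := K) A a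
  refine ⟨fun i => g (a' i), fun p hp => ?_⟩
  have hval : (aeval a' p : L) = aeval a p := ha' p fun i hi => Algebra.subset_adjoin <|
    Finset.mem_union_left _ (Finset.mem_image_of_mem a (Finset.mem_biUnion.2 ⟨p, hp, hi⟩))
  have hinv : (aeval a p)⁻¹ ∈ A := Algebra.subset_adjoin <|
    Finset.mem_union_right _ (Finset.mem_image_of_mem _ hp)
  rw [← comp_aeval_apply]
  constructor
  · intro hg
    by_contra hne
    have hunit : aeval a' p * ⟨_, hinv⟩ = 1 := Subtype.ext <|
      (congrArg (· * _) hval).trans (mul_inv_cancel₀ hne)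
    simpa [hg] using congrArg g hunit
  · intro h0
    have hzero : aeval a' p = 0 := Subtype.ext (hval.trans h0)
    rw [hzero, map_zero]

end ExistentiallyClosed

section LinearIndependence

variable {ι K E M κ : Type*} [Field K] [Field E] [Algebra K E] [AddCommGroup M] [Module E M]

section Inclusion

variable {L L' : IntermediateField K E}

theorem linearIndependent_of_intermediateField_le (h : L ≤ L') {v : κ → M}
    (hv : LinearIndependent L' v) : LinearIndependent L v :=
  hv.map_of_injective_injective (IntermediateField.inclusion h) (AddMonoidHom.id M)
    (fun _ => (map_eq_zero _).1) (fun _ => id) fun _ _ => rfl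

theorem mem_span_of_intermediateField_le (h : L ≤ L') {s : Set M} {w : M}
    (hw : w ∈ Submodule.span L s) : w ∈ Submodule.span L' s := by
  induction hw using Submodule.span_induction with
  | mem x hx => exact Submodule.subset_span hx
  | zero => exact zero_mem _
  | add x y _ _ hx hy => exact add_mem hx hy
  | smul c x _ hx => exact Submodule.smul_mem _ (IntermediateField.inclusion h c) hx

end Inclusion

variable [Preorder ι] [IsDirectedOrder ι] {F : ι → IntermediateField K E}
  [Module K M] [IsScalarTower K E M]

theorem mem_span_of_forall_mem_span_of_antitone (hF : Antitone F) (hF_bot : ⨅ i, F i = ⊥)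
    {v : κ → M} {i₀ : ι} (hv : LinearIndependent (F i₀) v) {w : M}
    (hw : ∀ i, w ∈ Submodule.span (F i) (Set.range v)) : w ∈ Submodule.span K (Set.range v) := by
  obtain ⟨c, hc⟩ := Finsupp.mem_span_range_iff_exists_finsupp.1 (hw i₀)
  -- The coordinates over a smaller `F j` are also coordinates over `F i₀`, which are unique.
  have hcF (k : κ) (i : ι) : (c k : E) ∈ F i := by
    obtain ⟨j, hij, hi₀j⟩ := exists_ge_ge i i₀
    obtain ⟨d, hd⟩ := Finsupp.mem_span_range_iff_exists_finsupp.1 (hw j)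
    have hdc : d.mapRange (IntermediateField.inclusion (hF hi₀j)) (map_zero _) = c := by
      refine hv (Eq.trans ?_ (hd.trans hc.symm))
      exact Finsupp.sum_mapRange_index fun _ => zero_smul _ _
    rw [← hdc]
    exact hF hij (d k).2
  have hcK (k : κ) : ∃ x : K, algebraMap K E x = c k := by
    rw [← Set.mem_range, ← IntermediateField.mem_bot, ← hF_bot,
      ← SetLike.mem_coe, IntermediateField.coe_iInf]
    exact Set.mem_iInter.2 (hcF k)
  choose x hx using hcK
  rw [← hc]
  refine Submodule.sum_mem _ fun k _ => ?_
  have hsmul : x k • v k = c k • v k := by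
    rw [IntermediateField.smul_def, ← hx, algebraMap_smul]
  change c k • v k ∈ _
  rw [← hsmul]
  exact Submodule.smul_mem _ _ (Submodule.subset_span ⟨k, rfl⟩)

theorem exists_linearIndepOn_of_antitone [Nonempty ι] (hF : Antitone F) (hF_bot : ⨅ i, F i = ⊥)
    {v : κ → M} {s : Set κ} (hs : s.Finite) (hv : LinearIndepOn K v s) :
    ∃ i, LinearIndepOn (F i) v s := by
  induction s, hs using Set.Finite.induction_on with
  | empty => exact ⟨Classical.arbitrary ι, linearIndepOn_empty _ _⟩
  | @insert k s hk _ ih =>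
    rw [linearIndepOn_insert hk] at hv
    obtain ⟨i₀, hi₀⟩ := ih hv.1
    by_contra! hdep
    refine hv.2 ?_
    rw [Set.image_eq_range]
    refine mem_span_of_forall_mem_span_of_antitone hF hF_bot hi₀ fun i => ?_
    obtain ⟨j, hij, hi₀j⟩ := exists_ge_ge i i₀
    have hj : LinearIndepOn (F j) v s := linearIndependent_of_intermediateField_le (hF hi₀j) hi₀
    have hspan : v k ∈ Submodule.span (F j) (v '' s) := by
      by_contra hnot
      exact hdep j ((linearIndepOn_insert hk).2 ⟨hj, hnot⟩)
    rw [Set.image_eq_range] at hspan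
    exact mem_span_of_intermediateField_le (hF hij) hspan

end LinearIndependence

section Ultraproduct

variable {ι K Ω E σ : Type*} [Field K] [Field Ω] [Field E] [Algebra K E] [Algebra Ω E]

/-- The coordinatewise algebra structure on germs, extending the module structure
`Filter.Germ.instModule`. -/
instance germAlgebra {R A : Type*} [CommSemiring R] [Semiring A] [Algebra R A] (l : Filter ι) :
    Algebra R (Germ l A) where
  algebraMap := (Germ.coeRingHom l).comp (algebraMap R (ι → A))
  commutes' r x := x.inductionOn fun f => congrArg _ (Algebra.commutes r f)
  smul_def' r x := x.inductionOn fun f => congrArg _ (Algebra.smul_def r f)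

instance germ_isScalarTower {R S A : Type*} [SMul R S] [SMul S A] [SMul R A] [IsScalarTower R S A]
    (l : Filter ι) : IsScalarTower R S (Germ l A) where
  smul_assoc r s x := x.inductionOn fun f => congrArg _ (smul_assoc r s f)

/-- The quotient map from families to germs, as a homomorphism of algebras. -/
def germMk (R : Type*) {A : Type*} [CommSemiring R] [Semiring A] [Algebra R A] (l : Filter ι) :
    (ι → A) →ₐ[R] Germ l A where
  __ := Germ.coeRingHom l
  commutes' _ := rfl

/-- The ultraproduct of the fields `F i`, realized inside the ultrapower of `E` as the germs of
families `a` with `a i ∈ F i`. -/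
def ultraproduct (U : Ultrafilter ι) (F : ι → IntermediateField K E) :
    IntermediateField K (Germ (U : Filter ι) E) where
  carrier := {x | ∃ a : ι → E, (∀ i, a i ∈ F i) ∧ germMk K U a = x}
  mul_mem' := by
    rintro _ _ ⟨a, ha, rfl⟩ ⟨b, hb, rfl⟩
    exact ⟨a * b, fun i => mul_mem (ha i) (hb i), map_mul _ _ _⟩
  add_mem' := by
    rintro _ _ ⟨a, ha, rfl⟩ ⟨b, hb, rfl⟩
    exact ⟨a + b, fun i => add_mem (ha i) (hb i), map_add _ _ _⟩
  algebraMap_mem' c := ⟨algebraMap K (ι → E) c, fun i => (F i).algebraMap_mem c, rfl⟩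
  inv_mem' := by
    rintro _ ⟨a, ha, rfl⟩
    exact ⟨a⁻¹, fun i => inv_mem (ha i), rfl⟩

variable {U : Ultrafilter ι} {F : ι → IntermediateField K E}

theorem germMk_eq_zero_iff {R A : Type*} [CommSemiring R] [Semiring A] [Algebra R A]
    {l : Filter ι} {a : ι → A} : germMk R l a = 0 ↔ ∀ᶠ i in l, a i = 0 :=
  Germ.coe_eq

theorem aeval_germMk {R A : Type*} [CommSemiring R] [CommSemiring A] [Algebra R A]
    (l : Filter ι) (a : ι → σ → A) (p : MvPolynomial σ R) :
    aeval (fun k => germMk R l fun i => a i k) p = germMk R l fun i => aeval (a i) p := by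
  rw [← comp_aeval_apply]
  exact congrArg _ (funext fun i => comp_aeval_apply _ (Pi.evalAlgHom R (fun _ => A) i) p)

variable [Preorder ι] [IsDirectedOrder ι]

theorem linearIndependent_ultraproduct (hU : ↑U ≤ (atTop : Filter ι)) (hF : Antitone F)
    (hF_bot : ⨅ i, F i = ⊥) {κ : Type*} {v : κ → E} (hv : LinearIndependent K v) :
    LinearIndependent (ultraproduct U F) fun k => germMk K (U : Filter ι) fun _ => v k := by
  have : Nonempty ι := nonempty_of_neBot (U : Filter ι)
  refine linearIndependent_iff'.2 fun s g hg => ?_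
  obtain ⟨i₀, hi₀⟩ := exists_linearIndepOn_of_antitone hF hF_bot s.finite_toSet
    (hv.linearIndepOn (s := s))
  choose a haF hag using fun k => (g k).2
  have hsum : ∀ᶠ i in (U : Filter ι), ∑ k ∈ s, a k i * v k = 0 := by
    rw [← germMk_eq_zero_iff (R := K), ← hg]
    simp only [IntermediateField.smul_def, ← hag, smul_eq_mul, ← map_mul, ← map_sum]
    congr 1
    ext i
    simp
  have hcoeff : ∀ᶠ i in (U : Filter ι), ∀ k ∈ s, a k i = 0 := by
    filter_upwards [hsum, hU (eventually_ge_atTop i₀)] with i hi hi₀i k hk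
    exact congrArg Subtype.val <| linearIndepOn_finset_iff.1 hi₀
      (fun k => ⟨a k i, hF hi₀i (haF k i)⟩) hi k hk
  refine fun k hk => Subtype.ext ?_
  rw [← hag]
  exact germMk_eq_zero_iff.2 (hcoeff.mono fun i hi => hi k hk)

theorem linearDisjoint_ultraproduct [Algebra K Ω] [IsScalarTower K Ω E]
    (hU : ↑U ≤ (atTop : Filter ι)) (hF : Antitone F) (hF_bot : ⨅ i, F i = ⊥) :
    (ultraproduct U F).LinearDisjoint Ω := by
  let e := Module.Basis.ofVectorSpace K Ω
  refine IntermediateField.LinearDisjoint.of_basis_right' e ?_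
  exact linearIndependent_ultraproduct hU hF hF_bot
    (e.linearIndependent.map' (IsScalarTower.toAlgHom K Ω E).toLinearMap
      (LinearMap.ker_eq_bot.2 (algebraMap Ω E).injective))

end Ultraproduct

section Intersection

variable {ι σ : Type*} [Preorder ι] [IsDirectedOrder ι] {K : Type u} [Field K]
  {E : Type*} [Field E] [Algebra K E] {F : ι → IntermediateField K E}

theorem isDomain_ultraproduct_tensorProduct [IsAlgClosed E] {U : Ultrafilter ι}
    (hU : ↑U ≤ (atTop : Filter ι)) (hF : Antitone F) (hF_bot : ⨅ i, F i = ⊥) (Ω : Type*) [Field Ω]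
    [Algebra K Ω] [Algebra.IsAlgebraic K Ω] : IsDomain (ultraproduct U F ⊗[K] Ω) := by
  let j : Ω →ₐ[K] E := IsAlgClosed.lift
  let := j.toRingHom.toAlgebra
  have : IsScalarTower K Ω E := .of_algHom j
  exact (linearDisjoint_ultraproduct hU hF hF_bot).isDomain

variable [Nonempty ι]

theorem IsPAC.exists_aeval_eq_zero_iff_of_isAlgClosed [IsAlgClosed E] (hK : IsPAC K)
    (hF : Antitone F) (hF_bot : ⨅ i, F i = ⊥) (S : Finset (MvPolynomial σ K))
    (a : ∀ i, σ → F i) :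
    ∃ (b : σ → K) (i : ι), ∀ p ∈ S, aeval b p = 0 ↔ aeval (a i) p = 0 := by
  let U : Ultrafilter ι := Ultrafilter.of atTop
  have hU : ↑U ≤ (atTop : Filter ι) := Ultrafilter.of_le atTop
  have := isDomain_ultraproduct_tensorProduct hU hF hF_bot (AlgebraicClosure K)
  let c (k : σ) : ultraproduct U F := ⟨germMk K U fun i => a i k, _, fun i => (a i k).2, rfl⟩
  obtain ⟨b, hb⟩ := hK.exists_aeval_eq_zero_iff S c
  have hc (p : MvPolynomial σ K) : aeval c p = 0 ↔ ∀ᶠ i in (U : Filter ι), aeval (a i) p = 0 := by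
    rw [← map_eq_zero (ultraproduct U F).val, comp_aeval_apply]
    change aeval (fun k => germMk K (U : Filter ι) fun i => (F i).val (a i k)) p = 0 ↔ _
    rw [aeval_germMk U (fun i k => (F i).val (a i k)), germMk_eq_zero_iff]
    simp only [← comp_aeval_apply, map_eq_zero]
  have hev : ∀ᶠ i in (U : Filter ι), ∀ p ∈ S, aeval b p = 0 ↔ aeval (a i) p = 0 := by
    refine (Finset.eventually_all S).2 fun p hp => ?_
    rw [hb p hp, hc]
    by_cases h : ∀ᶠ i in (U : Filter ι), aeval (a i) p = 0
    · exact h.mono fun i hi => iff_of_true h hi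
    · exact (Ultrafilter.eventually_not.2 h).mono fun i hi => iff_of_false h hi
  exact ⟨b, hev.exists⟩

theorem IsPAC.exists_aeval_eq_zero_iff_of_antitone (hK : IsPAC K) (hF : Antitone F)
    (hF_bot : ⨅ i, F i = ⊥) (S : Finset (MvPolynomial σ K)) (a : ∀ i, σ → F i) :
    ∃ (b : σ → K) (i : ι), ∀ p ∈ S, aeval b p = 0 ↔ aeval (a i) p = 0 := by
  let j : E →ₐ[K] AlgebraicClosure E := IsScalarTower.toAlgHom K E (AlgebraicClosure E)
  let e (i : ι) : F i →ₐ[K] (F i).map j := (F i).equivMap j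
  obtain ⟨b, i, hb⟩ := hK.exists_aeval_eq_zero_iff_of_isAlgClosed
    (F := fun i => (F i).map j) (fun _ _ hik => IntermediateField.map_mono j (hF hik))
    (by rw [← IntermediateField.map_iInf, hF_bot, IntermediateField.map_bot]) S
    fun i k => e i (a i k)
  refine ⟨b, i, fun p hp => (hb p hp).trans ?_⟩
  rw [← comp_aeval_apply, map_eq_zero]

end Intersection

open FirstOrder FirstOrder.Ring in
theorem qf_formula_realized_in_intersection_of_PAC_general {E : Type u} [Field E] {ι σ : Type*}
    [Preorder ι] [IsDirectedOrder ι] [Nonempty ι] {F : ι → Subfield E} (hF : Antitone F)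
    (hPAC : IsPAC ↥(⨅ i, F i)) {φ : Language.ring.Formula (↥(⨅ i, F i) ⊕ σ)} (hφ : φ.IsQF)
    (h : ∀ i,
      letI := compatibleRingOfRing ↥(F i)
      ∃ a : σ → ↥(F i), φ.Realize (Sum.elim (Subfield.inclusion (iInf_le F i)) a)) :
    letI := compatibleRingOfRing ↥(⨅ i, F i)
    ∃ b : σ → ↥(⨅ i, F i), φ.Realize (Sum.elim id b) := by
  let := compatibleRingOfRing ↥(⨅ i, F i)
  let L (i : ι) : IntermediateField ↥(⨅ i, F i) E := Subfield.extendScalars (iInf_le F i)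
  have hL : Antitone L := fun _ _ hij => hF hij
  have hL_bot : ⨅ i, L i = ⊥ := by
    refine eq_bot_iff.2 fun x hx => ?_
    rw [← SetLike.mem_coe, IntermediateField.coe_iInf, Set.mem_iInter] at hx
    exact IntermediateField.mem_bot.2 ⟨⟨x, Subfield.mem_iInf.2 hx⟩, rfl⟩
  choose a ha using h
  obtain ⟨S, hS⟩ := exists_finset_mvPolynomial_realize_iff_of_isQF hφ
  obtain ⟨b, i, hb⟩ := hPAC.exists_aeval_eq_zero_iff_of_antitone hL hL_bot S a
  let := compatibleRingOfRing ↥(F i)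
  exact ⟨b, (hS (RingHom.id _) (Subfield.inclusion (iInf_le F i)) b (a i) hb).2 (ha i)⟩

/-- Let `K₁ ⊇ K₂ ⊇ K₃ ⊇ ⋯` be a decreasing sequence of subfields of a field `K₁` whose
intersection `K_∞` is PAC. If a quantifier-free formula `φ` in the language of rings with
parameters from `K_∞` is satisfiable in every `K_n`, then it is satisfiable in `K_∞`. -/
theorem qf_formula_realized_in_intersection_of_PAC
    (K1 : Type u) [Field K1] (F : ℕ → Subfield K1)
    (hdec : ∀ m n : ℕ, m ≤ n → F n ≤ F m)
    (hPAC : IsPAC ↥(⨅ n : ℕ, F n))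
    (m : ℕ)
    (φ : FirstOrder.Language.ring.Formula (↥(⨅ n : ℕ, F n) ⊕ Fin m))
    (hqf : φ.IsQF) :
    (∀ n : ℕ,
        letI := FirstOrder.Ring.compatibleRingOfRing ↥(F n)
        ∃ a : Fin m → ↥(F n),
          φ.Realize (Sum.elim (fun c => Subfield.inclusion (iInf_le F n) c) a)) →
    letI := FirstOrder.Ring.compatibleRingOfRing ↥(⨅ n : ℕ, F n)
    ∃ b : Fin m → ↥(⨅ n : ℕ, F n), φ.Realize (Sum.elim id b) :=
  qf_formula_realized_in_intersection_of_PAC_general (fun m n => hdec m n) hPAC hqf
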